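/- Let A be an n×n matrix with nonnegative real entries whose tropical spectral radius λ = λ(A) is positive, and set B = (λ⁻¹A)*. Then the minimum over all positive vectors u ∈ ℝⁿ of the Hilbert seminorm K(B⊗u) equals δ = max_{i,j} B_{ij} (equivalently δ = 1ᵀ⊗B⊗1 for the all-ones vector 1), and the minimum is attained. -/

import Mathlib

/-- Max-times matrix product: `(A ⊗ B)_ik = max_j a_ij · b_jk`. -/
noncomputable def tMul {n : ℕ} (A B : Matrix (Fin n) (Fin n) ℝ) : Matrix (Fin n) (Fin n) ℝ :=
  fun i k => ⨆ j, A i j * B j k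

/-- Max-times matrix powers, with `A^⊗0 = I`. -/
noncomputable def tPow {n : ℕ} (A : Matrix (Fin n) (Fin n) ℝ) : ℕ → Matrix (Fin n) (Fin n) ℝ
  | 0 => fun i j => if i = j then 1 else 0
  | (k + 1) => tMul A (tPow A k)

/-- Tropical trace: `tr A = max_i a_ii`. -/
noncomputable def tTr {n : ℕ} (A : Matrix (Fin n) (Fin n) ℝ) : ℝ :=
  ⨆ i, A i i

/-- Tropical spectral radius: `λ(A) = max_{1 ≤ k ≤ n} (tr (A^⊗k))^(1/k)`. -/
noncomputable def tRadius {n : ℕ} (A : Matrix (Fin n) (Fin n) ℝ) : ℝ :=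
  ⨆ k : Fin n, (tTr (tPow A ((k : ℕ) + 1))) ^ ((1 : ℝ) / ((k : ℕ) + 1))

/-- Kleene star: `A* = I ⊕ A ⊕ A^⊗2 ⊕ ⋯ ⊕ A^⊗(n−1)` in the max-times algebra. -/
noncomputable def kStar {n : ℕ} (A : Matrix (Fin n) (Fin n) ℝ) : Matrix (Fin n) (Fin n) ℝ :=
  fun i j => ⨆ k : Fin n, tPow A (k : ℕ) i j

/-- Max-times matrix-vector product: `(B ⊗ u)_i = max_j b_ij · u_j`. -/
noncomputable def tMV {n : ℕ} (B : Matrix (Fin n) (Fin n) ℝ) (u : Fin n → ℝ) : Fin n → ℝ :=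
  fun i => ⨆ j, B i j * u j

/-- Hilbert seminorm of a positive vector: `K(x) = (max_i x_i) · (max_j 1/x_j)`. -/
noncomputable def hilbK {n : ℕ} (x : Fin n → ℝ) : ℝ :=
  (⨆ i, x i) * (⨆ j, (x j)⁻¹)

theorem tks_le_iSup {n : ℕ} (f : Fin n → ℝ) (i : Fin n) : f i ≤ ⨆ j, f j :=
  le_ciSup (Set.finite_range f).bddAbove i

theorem tks_exists {n : ℕ} (i : Fin n) (f : Fin n → ℝ) : ∃ j, f j = ⨆ j, f j := by
  have : Nonempty (Fin n) := ⟨i⟩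
  exact exists_eq_ciSup_of_finite

theorem tks_pow_nonneg {n : ℕ} (C : Matrix (Fin n) (Fin n) ℝ) (hC : ∀ i j, 0 ≤ C i j)
    (m : ℕ) : ∀ i j, 0 ≤ tPow C m i j := by
  induction m with
  | zero => intro i j; simp only [tPow]; split_ifs <;> norm_num
  | succ m ih =>
    intro i j
    exact Real.iSup_nonneg (fun k => mul_nonneg (hC i k) (ih k j))

theorem tks_pow_step {n : ℕ} (C : Matrix (Fin n) (Fin n) ℝ) (m : ℕ) (i j k : Fin n) :
    C i j * tPow C m j k ≤ tPow C (m + 1) i k :=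
  tks_le_iSup (fun j => C i j * tPow C m j k) j

theorem tks_pow_add {n : ℕ} (C : Matrix (Fin n) (Fin n) ℝ) (hC : ∀ i j, 0 ≤ C i j)
    (a b : ℕ) : ∀ i j k, tPow C a i j * tPow C b j k ≤ tPow C (a + b) i k := by
  induction a with
  | zero =>
    intro i j k
    have h0 : tPow C 0 i j = if i = j then 1 else 0 := rfl
    rw [h0, Nat.zero_add]
    split_ifs with h
    · subst h; simp
    · simpa using tks_pow_nonneg C hC b i k
  | succ a ih =>
    intro i j k
    obtain ⟨l, hl⟩ := tks_exists i (fun l => C i l * tPow C a l j)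
    have h1 : tPow C (a + 1) i j = C i l * tPow C a l j := hl.symm
    rw [h1, mul_assoc, show a + 1 + b = (a + b) + 1 by omega]
    exact (mul_le_mul_of_nonneg_left (ih l j k) (hC i l)).trans (tks_pow_step C (a + b) i l k)

theorem tks_walk {n : ℕ} (C : Matrix (Fin n) (Fin n) ℝ) (m : ℕ) :
    ∀ i j, tPow C m i j = 0 ∨ ∃ w : ℕ → Fin n, w 0 = i ∧ w m = j ∧
      tPow C m i j = ∏ k ∈ Finset.range m, C (w k) (w (k + 1)) := by
  induction m with
  | zero =>
    intro i j
    have h0 : tPow C 0 i j = if i = j then 1 else 0 := rfl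
    by_cases h : i = j
    · right; exact ⟨fun _ => i, rfl, h, by rw [h0, if_pos h]; simp⟩
    · left; simp [h0, h]
  | succ m ih =>
    intro i j
    obtain ⟨l, hl⟩ := tks_exists i (fun l => C i l * tPow C m l j)
    have h1 : tPow C (m + 1) i j = C i l * tPow C m l j := hl.symm
    rcases ih l j with h | ⟨w, hw0, hwm, hw⟩
    · left; rw [h1, h, mul_zero]
    · right
      refine ⟨fun k => Nat.casesOn k i w, rfl, hwm, ?_⟩
      rw [h1, hw, Finset.prod_range_succ', mul_comm]
      simp [hw0]

theorem tks_seg {n : ℕ} (C : Matrix (Fin n) (Fin n) ℝ) (hC : ∀ i j, 0 ≤ C i j)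
    (w : ℕ → Fin n) (m : ℕ) : ∀ a,
    ∏ k ∈ Finset.range m, C (w (a + k)) (w (a + k + 1)) ≤ tPow C m (w a) (w (a + m)) := by
  induction m with
  | zero => intro a; simp [tPow]
  | succ m ih =>
    intro a
    rw [Finset.prod_range_succ', mul_comm]
    have h := ih (a + 1)
    have e : ∏ k ∈ Finset.range m, C (w (a + (k + 1))) (w (a + (k + 1) + 1))
        = ∏ k ∈ Finset.range m, C (w (a + 1 + k)) (w (a + 1 + k + 1)) :=
      Finset.prod_congr rfl fun k _ => by rw [show a + (k + 1) = a + 1 + k by omega]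
    rw [e, show a + (m + 1) = a + 1 + m by omega, add_zero]
    exact (mul_le_mul_of_nonneg_left h (hC _ _)).trans (tks_pow_step C m _ _ _)

theorem tks_reduce {n : ℕ} (C : Matrix (Fin n) (Fin n) ℝ) (hC : ∀ i j, 0 ≤ C i j)
    (hcyc : ∀ k, k ≤ n → ∀ i, tPow C k i i ≤ 1) (m : ℕ) :
    ∀ i j, tPow C m i j ≤ kStar C i j := by
  induction m using Nat.strong_induction_on with
  | _ m ih =>
    intro i j
    by_cases hm : m < n
    · exact tks_le_iSup (fun k : Fin n => tPow C (k : ℕ) i j) ⟨m, hm⟩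
    push Not at hm
    rcases tks_walk C m i j with h | ⟨w, hw0, hwm, hw⟩
    · rw [h]
      exact Real.iSup_nonneg (fun k => tks_pow_nonneg C hC _ i j)
    obtain ⟨p, q, hpq, hqn, hwpq⟩ : ∃ p q : ℕ, p < q ∧ q ≤ n ∧ w p = w q := by
      obtain ⟨x, y, hxy, he⟩ := Fintype.exists_ne_map_eq_of_card_lt
        (fun x : Fin (n + 1) => w x) (by simp)
      rcases lt_or_gt_of_ne hxy with h | h
      · exact ⟨x, y, h, by omega, he⟩
      · exact ⟨y, x, h, by omega, he.symm⟩
    obtain ⟨c, rfl⟩ := Nat.exists_eq_add_of_lt hpq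
    obtain ⟨r, rfl⟩ := Nat.exists_eq_add_of_le (hqn.trans hm)
    have s1 := tks_seg C hC w p 0
    have s2 := tks_seg C hC w (c + 1) p
    have s3 := tks_seg C hC w r (p + c + 1)
    simp only [zero_add] at s1
    have hp : ∀ a m, 0 ≤ ∏ k ∈ Finset.range m, C (w (a + k)) (w (a + k + 1)) :=
      fun a m => Finset.prod_nonneg fun k _ => hC _ _
    rw [show p + (c + 1) = p + c + 1 by omega, ← hwpq] at s2
    have s2' := s2.trans (hcyc (c + 1) (by omega) (w p))
    rw [hw, Finset.prod_range_add, add_assoc p c 1, Finset.prod_range_add]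
    rw [add_assoc p c 1] at s3 hwm hwpq
    rw [hw0] at s1
    rw [hwm, ← hwpq] at s3
    have hp0 := hp 0 p
    simp only [zero_add] at hp0
    calc _ ≤ (tPow C p i (w p) * 1) * tPow C r (w p) j := by
          apply mul_le_mul _ s3 (hp _ _)
          · exact mul_nonneg (tks_pow_nonneg C hC _ _ _) zero_le_one
          · exact mul_le_mul s1 s2' (hp _ _) (tks_pow_nonneg C hC _ _ _)
      _ ≤ tPow C (p + r) i j := by
          rw [mul_one]; exact tks_pow_add C hC p r _ _ _
      _ ≤ _ := ih (p + r) (by omega) i j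

theorem tks_scale {n : ℕ} (A : Matrix (Fin n) (Fin n) ℝ) (c : ℝ) (hc : 0 ≤ c) (m : ℕ) :
    ∀ i j, tPow (fun i j => c * A i j) m i j = c ^ m * tPow A m i j := by
  induction m with
  | zero => intro i j; simp [tPow]
  | succ m ih =>
    intro i j
    simp only [tPow, tMul]
    rw [Real.mul_iSup_of_nonneg (pow_nonneg hc _)]
    congr 1
    funext k
    rw [ih k j]
    ring

theorem tks_cyc {n : ℕ} (A : Matrix (Fin n) (Fin n) ℝ) (hA : ∀ i j, 0 ≤ A i j)
    (hpos : 0 < tRadius A) (k : ℕ) (hk : k ≤ n) (i : Fin n) :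
    tPow (fun i j => (tRadius A)⁻¹ * A i j) k i i ≤ 1 := by
  rcases k with _ | k
  · simp [tPow]
  rw [tks_scale A _ (inv_nonneg.2 hpos.le), inv_pow, inv_mul_le_iff₀ (pow_pos hpos _), mul_one]
  have h0 := tks_pow_nonneg A hA (k + 1) i i
  have h1 : tPow A (k + 1) i i ≤ tTr (tPow A (k + 1)) :=
    tks_le_iSup (fun i => tPow A (k + 1) i i) i
  have h2 : (tTr (tPow A (k + 1))) ^ ((1 : ℝ) / ((k : ℕ) + 1)) ≤ tRadius A :=
    tks_le_iSup (fun k : Fin n => (tTr (tPow A ((k : ℕ) + 1))) ^ ((1 : ℝ) / ((k : ℕ) + 1)))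
      ⟨k, hk⟩
  have ht := h0.trans h1
  have h3 := pow_le_pow_left₀ (Real.rpow_nonneg ht _) h2 (k + 1)
  have h4 : ((tTr (tPow A (k + 1))) ^ ((1 : ℝ) / ((k : ℕ) + 1))) ^ (k + 1)
      = tTr (tPow A (k + 1)) := by
    have := Real.rpow_inv_natCast_pow ht (Nat.succ_ne_zero k)
    simpa [one_div] using this
  rw [h4] at h3
  exact h1.trans h3

/-- For a nonnegative matrix `A` with positive tropical spectral radius
`λ = λ(A)` and `B = (λ⁻¹ A)*`, the minimum over positive vectors `u` of the
Hilbert seminorm `K(B ⊗ u)` equals `δ = max_{i,j} B_ij`, and it is attained. -/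
theorem min_hilbert_seminorm_over_kleene_image (n : ℕ) (hn : 1 ≤ n)
    (A : Matrix (Fin n) (Fin n) ℝ) (hA : ∀ i j, 0 ≤ A i j)
    (hpos : 0 < tRadius A)
    (B : Matrix (Fin n) (Fin n) ℝ)
    (hB : B = kStar (fun i j => (tRadius A)⁻¹ * A i j))
    (δ : ℝ) (hδ : δ = ⨆ i, ⨆ j, B i j) :
    IsLeast {v : ℝ | ∃ u : Fin n → ℝ, (∀ i, 0 < u i) ∧ v = hilbK (tMV B u)} δ := by
  have : Nonempty (Fin n) := ⟨⟨0, hn⟩⟩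
  have hcyc := tks_cyc A hA hpos
  have hC : ∀ i j, 0 ≤ (fun i j => (tRadius A)⁻¹ * A i j : Matrix (Fin n) (Fin n) ℝ) i j :=
    fun i j => mul_nonneg (inv_nonneg.2 hpos.le) (hA i j)
  generalize (fun i j => (tRadius A)⁻¹ * A i j : Matrix (Fin n) (Fin n) ℝ) = C at hB hcyc hC
  have hred := tks_reduce C hC hcyc
  rw [← hB] at hred
  have hB0 : ∀ i j, 0 ≤ B i j := fun i j => (tks_pow_nonneg C hC 0 i j).trans (hred 0 i j)
  have hB1 : ∀ i, 1 ≤ B i i := fun i => by simpa [tPow] using hred 0 i i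
  have hBB : ∀ i j k, B i j * B j k ≤ B i k := by
    intro i j k
    obtain ⟨a, ha⟩ := tks_exists i (fun a : Fin n => tPow C (a : ℕ) i j)
    obtain ⟨b, hb⟩ := tks_exists i (fun a : Fin n => tPow C (a : ℕ) j k)
    have ha' : B i j = tPow C a i j := by rw [hB]; exact ha.symm
    have hb' : B j k = tPow C b j k := by rw [hB]; exact hb.symm
    rw [ha', hb']
    exact (tks_pow_add C hC a b i j k).trans (hred _ i k)
  have hlow : ∀ u : Fin n → ℝ, (∀ i, 0 < u i) → δ ≤ hilbK (tMV B u) := by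
    intro u hu
    have hx : ∀ i, 0 < tMV B u i := fun i =>
      (mul_pos (zero_lt_one.trans_le (hB1 i)) (hu i)).trans_le
        (tks_le_iSup (fun j => B i j * u j) i)
    rw [hδ]
    refine ciSup_le fun i => ciSup_le fun j => ?_
    have h1 : B i j * tMV B u j ≤ tMV B u i := by
      obtain ⟨l, hl⟩ := tks_exists j (fun l => B j l * u l)
      have hl' : tMV B u j = B j l * u l := hl.symm
      rw [hl', ← mul_assoc]
      exact (mul_le_mul_of_nonneg_right (hBB i j l) (hu l).le).trans
        (tks_le_iSup (fun l => B i l * u l) l)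
    calc B i j ≤ tMV B u i * (tMV B u j)⁻¹ := by
          rw [← div_eq_mul_inv, le_div_iff₀ (hx j)]; exact h1
      _ ≤ _ := mul_le_mul (tks_le_iSup _ i) (tks_le_iSup (fun j => (tMV B u j)⁻¹) j)
          (inv_nonneg.2 (hx j).le) (Real.iSup_nonneg fun i => (hx i).le)
  refine ⟨⟨fun _ => 1, fun _ => one_pos, le_antisymm (hlow _ fun _ => one_pos) ?_⟩, ?_⟩
  · have hx : tMV B (fun _ => 1) = fun i => ⨆ j, B i j := by
      funext i; simp [tMV]
    unfold hilbK
    rw [hx, ← hδ]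
    have hd : 0 ≤ δ := hδ ▸ Real.iSup_nonneg fun i => Real.iSup_nonneg fun j => hB0 i j
    exact mul_le_of_le_one_right hd (ciSup_le fun j =>
      inv_le_one_of_one_le₀ ((hB1 j).trans (tks_le_iSup (fun k => B j k) j)))
  · rintro v ⟨u, hu, rfl⟩
    exact hlow u hu
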